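/- Let h : Z → ℝ be convex and differentiable with ∇h Lipschitz continuous with modulus bounded by L, P proper closed convex, M : Z → Y a nonzero linear map, b ∈ Y, and assume (Range(M) − b) ∩ ri(dom P) ≠ ∅. Consider the AMA iterates with β = 1/L: x^{t+1} = argmin_x { h*(x) − ⟨z^t, x⟩ }, y^{t+1} ∈ Argmin_y { P*(y) + ⟨b, y⟩ − ⟨z^t, M*y⟩ + (β/2)‖x^{t+1} + M*y‖² }, z^{t+1} = z^t − β(x^{t+1} + M*y^{t+1}). Then the sequence {z^t} generated by this AMA satisfies the proximal gradient recursion z^{t+1} = argmin_z { ⟨∇h(z^t), z⟩ + P(Mz − b) + (L/2)‖z − z^t‖² }; conversely, if {z^t} satisfies the proximal gradient recursion, then setting x^{t+1} = ∇h(z^t) there exists y^{t+1} ∈ ∂P(Mz^{t+1} − b) such that (x^t, y^t, z^t) are iterates of the AMA. -/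

import Mathlib

/-!
Both algorithms are characterised, step by step, by the same optimality conditions
`x₁ = ∇h(z)`, `y₁ ∈ ∂P(M z₁ - b)` and `z₁ = z - β (x₁ + M* y₁)`.

The `x`-subproblem says that `x₁` is a subgradient of the differentiable convex function `h`
at `z`, that is, `x₁ = ∇h(z)` (`ama_grad_of_x_step`, `ama_x_step_of_grad`). Inserting the
`z`-update into the optimality condition of the `y`-subproblem turns it into
`M z₁ - b ∈ ∂P*(y₁)`, which is inverted to `y₁ ∈ ∂P(M z₁ - b)` by the Fenchel–Moreau theorem
(`ama_fenchel_moreau`, proved by separating points from the closed epigraph). With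
`β = 1 / L`, the `z`-update reads `0 = ∇h(z) + M* y₁ + L (z₁ - z)`, so `z₁` is optimal for
the convex proximal gradient subproblem.

Conversely, optimality of `z₁` says that `-∇h(z) - L (z₁ - z)` is a subgradient of
`P ∘ (M · - b)` at `z₁`. The relative-interior qualification enters only here: it makes
the chain rule available (`ama_chain_rule`), so that this vector is `M* y₁` for some
`y₁ ∈ ∂P(M z₁ - b)`. The chain rule is obtained from M. Riesz's extension theorem for the
cone generated by the translated epigraph (`ama_extend_subgrad`).
-/

open RealInnerProductSpace Filter Topology

/-- `v` is a subgradient of the extended-real-valued function `f` at `x`. -/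
def IsSubgradAt {E : Type*} [NormedAddCommGroup E] [InnerProductSpace ℝ E]
    (f : E → EReal) (v x : E) : Prop :=
  ∀ u, f x + ((⟪v, u - x⟫ : ℝ) : EReal) ≤ f u

/-- The convex conjugate of an extended-real-valued function. -/
noncomputable def conj {E : Type*} [NormedAddCommGroup E] [InnerProductSpace ℝ E]
    (f : E → EReal) (w : E) : EReal :=
  ⨆ u, ((⟪w, u⟫ : ℝ) : EReal) - f u

/-- The convex conjugate of a real-valued function. -/
noncomputable def conjR {E : Type*} [NormedAddCommGroup E] [InnerProductSpace ℝ E]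
    (f : E → ℝ) (w : E) : EReal :=
  ⨆ u, ((⟪w, u⟫ - f u : ℝ) : EReal)

section AMAProof

variable {E : Type*} [NormedAddCommGroup E] [InnerProductSpace ℝ E]

theorem ama_norm_add_smul_sq (p q : E) (t : ℝ) :
    ‖p + t • q‖ ^ 2 = ‖p‖ ^ 2 + 2 * t * ⟪p, q⟫ + t ^ 2 * ‖q‖ ^ 2 := by
  rw [norm_add_sq_real, inner_smul_right, norm_smul, mul_pow, Real.norm_eq_abs, sq_abs]
  ring

/-- A first-order optimality test: the linear coefficient of a quadratic that is nonnegative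
on `(0, 1]` and vanishes at `0` is nonnegative. -/
theorem ama_first_order {A B : ℝ} (H : ∀ t : ℝ, 0 < t → t ≤ 1 → 0 ≤ t * A + t ^ 2 * B) :
    0 ≤ A := by
  have h1 : ∀ t : ℝ, 0 < t → t ≤ 1 → 0 ≤ A + t * B := by
    intro t ht ht1
    have := H t ht ht1
    have h2 : 0 ≤ t * (A + t * B) := by nlinarith
    exact nonneg_of_mul_nonneg_right h2 ht
  have h2 : Tendsto (fun t : ℝ => A + t * B) (𝓝[>] 0) (𝓝 A) := by
    have : Continuous (fun t : ℝ => A + t * B) := by fun_prop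
    have := this.tendsto 0
    simp only [zero_mul, add_zero] at this
    exact this.mono_left nhdsWithin_le_nhds
  refine ge_of_tendsto h2 ?_
  filter_upwards [Ioc_mem_nhdsGT (zero_lt_one (α := ℝ))] with t ht
  exact h1 t ht.1 ht.2

/-! ### The smooth part `h` -/

theorem ama_gradient_ineq [CompleteSpace E] {h : E → ℝ} {h' : E → E}
    (hconv : ConvexOn ℝ Set.univ h) (hgrad : ∀ w : E, HasGradientAt h (h' w) w) (z u : E) :
    h z + ⟪h' z, u - z⟫ ≤ h u := by
  have hd : HasDerivAt (fun t : ℝ => h (z + t • (u - z))) ⟪h' z, u - z⟫ 0 := by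
    have h1 : HasDerivAt (fun t : ℝ => z + t • (u - z)) (u - z) 0 := by
      simpa using ((hasDerivAt_id (0 : ℝ)).smul_const (u - z)).const_add z
    have h2 : HasFDerivAt h (InnerProductSpace.toDual ℝ E (h' z)) (z + (0 : ℝ) • (u - z)) := by
      simpa using (hgrad z).hasFDerivAt
    exact h2.comp_hasDerivAt (0 : ℝ) h1
  have hc : ConvexOn ℝ Set.univ (fun t : ℝ => h (z + t • (u - z))) := by
    refine ⟨convex_univ, ?_⟩
    intro s _ t _ a b ha hb hab
    have := hconv.2 (Set.mem_univ (z + s • (u - z))) (Set.mem_univ (z + t • (u - z))) ha hb hab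
    refine le_trans (le_of_eq ?_) this
    obtain rfl : b = 1 - a := by linarith
    refine congrArg h ?_
    simp only [smul_eq_mul]
    module
  have := hc.le_slope_of_hasDerivAt (Set.mem_univ 0) (Set.mem_univ 1) zero_lt_one hd
  simp [slope_def_field] at this
  linarith

/-- Fenchel's equality for a differentiable convex function. -/
theorem ama_conjR_grad [CompleteSpace E] {h : E → ℝ} {h' : E → E}
    (hconv : ConvexOn ℝ Set.univ h) (hgrad : ∀ w : E, HasGradientAt h (h' w) w) (z : E) :
    conjR h (h' z) = ((⟪h' z, z⟫ - h z : ℝ) : EReal) := by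
  refine le_antisymm (iSup_le fun u => ?_)
    (le_iSup (fun u => ((⟪h' z, u⟫ - h u : ℝ) : EReal)) z)
  have := ama_gradient_ineq hconv hgrad z u
  rw [inner_sub_right] at this
  exact EReal.coe_le_coe_iff.2 (by linarith)

theorem ama_x_step_of_grad [CompleteSpace E] {h : E → ℝ} {h' : E → E}
    (hconv : ConvexOn ℝ Set.univ h) (hgrad : ∀ w : E, HasGradientAt h (h' w) w) (z x' : E) :
    conjR h (h' z) + ((-⟪z, h' z⟫ : ℝ) : EReal) ≤ conjR h x' + ((-⟪z, x'⟫ : ℝ) : EReal) := by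
  rw [ama_conjR_grad hconv hgrad]
  have h1 : ((⟪x', z⟫ - h z : ℝ) : EReal) ≤ conjR h x' :=
    le_iSup (fun u => ((⟪x', u⟫ - h u : ℝ) : EReal)) z
  refine le_trans ?_ (add_le_add_left h1 _)
  rw [← EReal.coe_add, ← EReal.coe_add, EReal.coe_le_coe_iff, real_inner_comm z (h' z),
    real_inner_comm z x']
  linarith

theorem ama_grad_of_x_step [CompleteSpace E] {h : E → ℝ} {h' : E → E}
    (hconv : ConvexOn ℝ Set.univ h) (hgrad : ∀ w : E, HasGradientAt h (h' w) w) (z x : E)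
    (hx : ∀ x', conjR h x + ((-⟪z, x⟫ : ℝ) : EReal) ≤ conjR h x' + ((-⟪z, x'⟫ : ℝ) : EReal)) :
    x = h' z := by
  have h0 := hx (h' z)
  rw [ama_conjR_grad hconv hgrad, ← EReal.coe_add] at h0
  have hmin : ∀ u, h z - ⟪x, z⟫ ≤ h u - ⟪x, u⟫ := by
    intro u
    have h1 : ((⟪x, u⟫ - h u : ℝ) : EReal) ≤ conjR h x :=
      le_iSup (fun u => ((⟪x, u⟫ - h u : ℝ) : EReal)) u
    have h2 := (add_le_add_left h1 ((-⟪z, x⟫ : ℝ) : EReal)).trans h0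
    rw [← EReal.coe_add, EReal.coe_le_coe_iff, real_inner_comm z (h' z)] at h2
    rw [real_inner_comm x z] at h2
    linarith
  have hl : IsLocalMin (fun u => h u - ⟪x, u⟫) z := Eventually.of_forall hmin
  have hf : HasFDerivAt (fun u => h u - ⟪x, u⟫)
      (InnerProductSpace.toDual ℝ E (h' z) - InnerProductSpace.toDual ℝ E x) z :=
    (hgrad z).hasFDerivAt.sub (InnerProductSpace.toDual ℝ E x).hasFDerivAt
  have := hl.hasFDerivAt_eq_zero hf
  rw [sub_eq_zero] at this
  exact ((InnerProductSpace.toDual ℝ E).injective this).symm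

/-! ### Conjugates of extended-real-valued functions -/

/-- Convexity of `P : E → EReal`, expressed through real upper bounds on its values
(that is, convexity of the epigraph). -/
def AMAConvex (P : E → EReal) : Prop :=
  ∀ (u₁ u₂ : E) (r₁ r₂ a b : ℝ), P u₁ ≤ r₁ → P u₂ ≤ r₂ → 0 ≤ a → 0 ≤ b → a + b = 1 →
    P (a • u₁ + b • u₂) ≤ ((a * r₁ + b * r₂ : ℝ) : EReal)

theorem ama_conj_le_iff {P : E → EReal} (hbot : ∀ u, P u ≠ ⊥) {w : E} {c : ℝ} :
    conj P w ≤ c ↔ ∀ (u : E) (r : ℝ), P u ≤ r → ⟪w, u⟫ - r ≤ c := by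
  unfold conj
  rw [iSup_le_iff]
  refine forall_congr' fun u => ?_
  constructor
  · intro H r hr
    have h1 : ((⟪w, u⟫ : ℝ) : EReal) - (r : EReal) ≤ ((⟪w, u⟫ : ℝ) : EReal) - P u :=
      EReal.sub_le_sub le_rfl hr
    have h2 := h1.trans H
    rwa [← EReal.coe_sub, EReal.coe_le_coe_iff] at h2
  · intro H
    by_cases ht : P u = ⊤
    · rw [ht]; simp
    · have h1 := H (P u).toReal (EReal.le_coe_toReal ht)
      rw [← EReal.coe_toReal ht (hbot u), ← EReal.coe_sub, EReal.coe_le_coe_iff]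
      exact h1

theorem ama_conj_ne_bot {P : E → EReal} (hprop : ∃ u, P u ≠ ⊤) (hbot : ∀ u, P u ≠ ⊥) (w : E) :
    conj P w ≠ ⊥ := by
  obtain ⟨u, hu⟩ := hprop
  have h1 : ((⟪w, u⟫ : ℝ) : EReal) - P u ≤ conj P w :=
    le_iSup (fun u => ((⟪w, u⟫ : ℝ) : EReal) - P u) u
  rw [← EReal.coe_toReal hu (hbot u), ← EReal.coe_sub] at h1
  intro h
  rw [h, le_bot_iff] at h1
  exact EReal.coe_ne_bot _ h1

theorem ama_conj_convex {P : E → EReal} (hbot : ∀ u, P u ≠ ⊥) : AMAConvex (conj P) := by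
  intro w₁ w₂ c₁ c₂ a b h₁ h₂ ha hb hab
  rw [ama_conj_le_iff hbot] at h₁ h₂ ⊢
  intro u r hr
  have e1 := mul_le_mul_of_nonneg_left (h₁ u r hr) ha
  have e2 := mul_le_mul_of_nonneg_left (h₂ u r hr) hb
  rw [inner_add_left, real_inner_smul_left, real_inner_smul_left]
  have : r = (a + b) * r := by rw [hab, one_mul]
  linarith

theorem ama_convex_of {P : E → EReal}
    (hP : ∀ (u₁ u₂ : E) (a b : ℝ), 0 ≤ a → 0 ≤ b → a + b = 1 →
      P (a • u₁ + b • u₂) ≤ (a : EReal) * P u₁ + (b : EReal) * P u₂) : AMAConvex P := by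
  intro u₁ u₂ r₁ r₂ a b h₁ h₂ ha hb hab
  refine (hP u₁ u₂ a b ha hb hab).trans ?_
  rw [EReal.coe_add, EReal.coe_mul, EReal.coe_mul]
  exact add_le_add (mul_le_mul_of_nonneg_left h₁ (EReal.coe_nonneg.2 ha))
    (mul_le_mul_of_nonneg_left h₂ (EReal.coe_nonneg.2 hb))

/-- Strict separation of a point lying below the graph of `P` from the epigraph. The
hyperplane may be vertical (`α = 0`), except under points of the domain. -/
theorem ama_separate [CompleteSpace E] {P : E → EReal} (hprop : ∃ u, P u ≠ ⊤)
    (hlsc : LowerSemicontinuous P) (hcvx : AMAConvex P)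
    {s : E} {c : ℝ} (hc : (c : EReal) < P s) :
    ∃ (a : E) (α γ : ℝ), 0 ≤ α ∧ ⟪a, s⟫ + α * c < γ ∧
      ∀ (u : E) (r : ℝ), P u ≤ r → γ < ⟪a, u⟫ + α * r := by
  set S : Set (E × ℝ) := {p | P p.1 ≤ (p.2 : EReal)} with hS
  have hconv : Convex ℝ S := by
    intro p hp q hq a b ha hb hab
    exact hcvx p.1 q.1 p.2 q.2 a b hp hq ha hb hab
  have hcl : IsClosed S := by
    have h1 := hlsc.isClosed_epigraph
    have h2 : Continuous (fun p : E × ℝ => (p.1, (p.2 : EReal))) :=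
      continuous_fst.prodMk (continuous_coe_real_ereal.comp continuous_snd)
    exact h1.preimage h2
  have hns : (s, c) ∉ S := fun h => absurd h (not_le.2 hc)
  obtain ⟨f, γ, h1, h2⟩ := geometric_hahn_banach_point_closed hconv hcl hns
  have hf : ∀ (u : E) (r : ℝ), f (u, r) =
      ⟪(InnerProductSpace.toDual ℝ E).symm (f.comp (ContinuousLinearMap.inl ℝ E ℝ)), u⟫
        + f (0, 1) * r := by
    intro u r
    rw [InnerProductSpace.toDual_symm_apply]
    have : (u, r) = (u, (0 : ℝ)) + r • ((0 : E), (1 : ℝ)) := by simp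
    rw [this, map_add, map_smul]
    simp [mul_comm]
  refine ⟨(InnerProductSpace.toDual ℝ E).symm (f.comp (ContinuousLinearMap.inl ℝ E ℝ)),
    f (0, 1), γ, ?_, ?_, ?_⟩
  · -- the epigraph is unbounded upwards, so a negative slope `α` is impossible
    by_contra! hneg
    obtain ⟨u, hu⟩ := hprop
    have h3 : ∀ t : ℝ, 0 ≤ t → γ < f (u, (P u).toReal) + f (0, 1) * t := by
      intro t ht
      have h4 : (u, (P u).toReal + t) ∈ S := by
        show P u ≤ (((P u).toReal + t : ℝ) : EReal)
        exact (EReal.le_coe_toReal hu).trans (EReal.coe_le_coe_iff.2 (by linarith))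
      have h5 := h2 _ h4
      rw [hf] at h5 ⊢
      linarith
    have h6 := h3 0 le_rfl
    have h7 := h3 ((f (u, (P u).toReal) - γ) / (-f (0, 1)))
      (div_nonneg (by linarith) (by linarith))
    have h8 : f (0, 1) * ((f (u, (P u).toReal) - γ) / (-f (0, 1)))
        = -(f (u, (P u).toReal) - γ) := by
      rw [div_neg, mul_neg, mul_div_cancel₀ _ hneg.ne]
    linarith
  · rw [← hf]; exact h1
  · intro u r hr
    rw [← hf]; exact h2 (u, r) hr

/-- A non-vertical separating hyperplane is an affine minorant of `P`. -/
theorem ama_minorant_of_pos {P : E → EReal} (hbot : ∀ u, P u ≠ ⊥) {s a : E} {α γ c : ℝ}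
    (hα : 0 < α) (hs : ⟪a, s⟫ + α * c < γ)
    (H : ∀ (u : E) (r : ℝ), P u ≤ r → γ < ⟪a, u⟫ + α * r) :
    ∃ (v : E) (d : ℝ), c < ⟪v, s⟫ - d ∧ conj P v ≤ d := by
  have key : ∀ u : E, ⟪(-α⁻¹) • a, u⟫ - (-(α⁻¹ * γ)) = α⁻¹ * (γ - ⟪a, u⟫) := by
    intro u; rw [real_inner_smul_left]; ring
  refine ⟨(-α⁻¹) • a, -(α⁻¹ * γ), ?_, (ama_conj_le_iff hbot).2 fun u r hr => ?_⟩
  · rw [key, inv_mul_eq_div, lt_div_iff₀ hα]; linarith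
  · have h1 := key u
    have h2 : α⁻¹ * (γ - ⟪a, u⟫) ≤ r := by
      rw [inv_mul_eq_div, div_le_iff₀ hα]; linarith [H u r hr]
    linarith

/-- The Fenchel–Moreau theorem: a proper closed convex function is the supremum of its affine
minorants. A vertical separating hyperplane is tilted by adding a large multiple of it to an
affine minorant obtained below a point of the domain. -/
theorem ama_fenchel_moreau [CompleteSpace E] {P : E → EReal} (hbot : ∀ u, P u ≠ ⊥)
    (hprop : ∃ u, P u ≠ ⊤) (hlsc : LowerSemicontinuous P) (hcvx : AMAConvex P)
    {s : E} {c : ℝ} (hc : (c : EReal) < P s) :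
    ∃ (v : E) (d : ℝ), c < ⟪v, s⟫ - d ∧ conj P v ≤ d := by
  obtain ⟨a, α, γ, hα, hs, H⟩ := ama_separate hprop hlsc hcvx hc
  rcases hα.lt_or_eq with hα | rfl
  · exact ama_minorant_of_pos hbot hα hs H
  obtain ⟨u₀, hu₀⟩ := hprop
  have hc₀ : (((P u₀).toReal - 1 : ℝ) : EReal) < P u₀ := by
    nth_rewrite 2 [← EReal.coe_toReal hu₀ (hbot u₀)]
    exact EReal.coe_lt_coe_iff.2 (by linarith)
  obtain ⟨a₀, α₀, γ₀, hα₀, hs₀, H₀⟩ := ama_separate ⟨u₀, hu₀⟩ hlsc hcvx hc₀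
  have hpos : 0 < α₀ := by
    have := H₀ u₀ _ (EReal.le_coe_toReal hu₀)
    linarith
  obtain ⟨v₀, d₀, -, hd₀⟩ := ama_minorant_of_pos hbot hpos hs₀ H₀
  have hgap : 0 < γ - ⟪a, s⟫ := by linarith
  obtain ⟨k, hk⟩ := exists_nat_gt ((c - (⟪v₀, s⟫ - d₀)) / (γ - ⟪a, s⟫))
  rw [div_lt_iff₀ hgap] at hk
  refine ⟨v₀ - (k : ℝ) • a, d₀ - k * γ, ?_, (ama_conj_le_iff hbot).2 fun u r hr => ?_⟩
  · rw [inner_sub_left, real_inner_smul_left]; linarith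
  · rw [inner_sub_left, real_inner_smul_left]
    have h1 := (ama_conj_le_iff hbot).1 hd₀ u r hr
    have h2 := H u r hr
    have h3 : 0 ≤ (k : ℝ) * (⟪a, u⟫ - γ) :=
      mul_nonneg (Nat.cast_nonneg k) (by linarith)
    linarith

/-- The inversion `s ∈ ∂P*(y) ⇒ y ∈ ∂P(s)`, together with finiteness of `P s`. -/
theorem ama_subgrad_of_conj [CompleteSpace E] {P : E → EReal} (hbot : ∀ u, P u ≠ ⊥)
    (hprop : ∃ u, P u ≠ ⊤) (hlsc : LowerSemicontinuous P) (hcvx : AMAConvex P)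
    {s y : E} {c : ℝ} (hy : conj P y ≤ c)
    (H : ∀ (y' : E) (c' : ℝ), conj P y' ≤ c' → c + ⟪s, y' - y⟫ ≤ c') :
    P s ≠ ⊤ ∧ IsSubgradAt P y s := by
  have h1 : P s ≤ ((⟪s, y⟫ - c : ℝ) : EReal) := by
    by_contra! hlt
    obtain ⟨v, d, hv, hd⟩ := ama_fenchel_moreau hbot hprop hlsc hcvx hlt
    have h2 := H v d hd
    rw [inner_sub_right, real_inner_comm v s] at h2
    linarith
  refine ⟨ne_top_of_le_ne_top (EReal.coe_ne_top _) h1, fun u => ?_⟩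
  by_cases hu : P u = ⊤
  · rw [hu]; exact le_top
  have h3 := (ama_conj_le_iff hbot).1 hy u _ (EReal.le_coe_toReal hu)
  refine (add_le_add_left h1 _).trans ?_
  rw [← EReal.coe_add]
  nth_rewrite 1 [← EReal.coe_toReal hu (hbot u)]
  rw [EReal.coe_le_coe_iff, inner_sub_right, real_inner_comm y s]
  linarith

/-! ### Subdifferential chain rule under the relative-interior qualification -/

/-- From a relative interior point one can move a little in every direction of the affine
span without leaving the set. -/
theorem ama_ri_move {D : Set E} {x w : E} (hx : x ∈ intrinsicInterior ℝ D)
    (hw : w ∈ (affineSpan ℝ D).direction) : ∃ ε : ℝ, 0 < ε ∧ x + ε • w ∈ D := by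
  obtain ⟨x', hx', rfl⟩ := hx
  have hm : ∀ t : ℝ, (x' : E) + t • w ∈ affineSpan ℝ D := by
    intro t
    have := AffineSubspace.vadd_mem_of_mem_direction
      ((affineSpan ℝ D).direction.smul_mem t hw) x'.2
    rwa [vadd_eq_add, add_comm] at this
  have hcont : Continuous (fun t : ℝ => (⟨(x' : E) + t • w, hm t⟩ : affineSpan ℝ D)) :=
    Continuous.subtype_mk (by fun_prop) _
  have hev : ∀ᶠ t : ℝ in 𝓝 0, (x' : E) + t • w ∈ D := by
    have h1 := hcont.tendsto 0
    simp only [zero_smul, add_zero, Subtype.coe_eta] at h1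
    filter_upwards [h1 (mem_interior_iff_mem_nhds.1 hx')] with t ht using ht
  have hev' : ∀ᶠ t : ℝ in 𝓝[>] 0, (x' : E) + t • w ∈ D := hev.filter_mono nhdsWithin_le_nhds
  obtain ⟨t, ht, ht0⟩ := (hev'.and self_mem_nhdsWithin).exists
  exact ⟨t, ht0, ht⟩

/-- The cone in `E × ℝ` generated by the epigraph of `P` translated so that `(s, p)` becomes
the origin. -/
def amaCone {P : E → EReal} (hcvx : AMAConvex P) {s : E} {p : ℝ} (hp : P s = p) :
    PointedCone ℝ (E × ℝ) where
  carrier := {x | ∃ μ : ℝ, 0 < μ ∧ P (s + μ • x.1) ≤ ((p + μ * x.2 : ℝ) : EReal)}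
  zero_mem' := ⟨1, one_pos, by simp [hp]⟩
  add_mem' := by
    rintro ⟨u₁, r₁⟩ ⟨u₂, r₂⟩ ⟨μ₁, h₁, H₁⟩ ⟨μ₂, h₂, H₂⟩
    have hsum : 0 < μ₁ + μ₂ := add_pos h₁ h₂
    have hab : μ₂ / (μ₁ + μ₂) + μ₁ / (μ₁ + μ₂) = 1 := by field_simp; ring
    refine ⟨μ₁ * μ₂ / (μ₁ + μ₂), by positivity, ?_⟩
    have h3 := hcvx _ _ _ _ (μ₂ / (μ₁ + μ₂)) (μ₁ / (μ₁ + μ₂)) H₁ H₂ (by positivity)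
      (by positivity) hab
    convert h3 using 2
    · simp only [Prod.mk_add_mk]
      have hs : s = (μ₂ / (μ₁ + μ₂) + μ₁ / (μ₁ + μ₂)) • s := by rw [hab, one_smul]
      nth_rewrite 1 [hs]
      module
    · simp only [Prod.mk_add_mk]
      field_simp
      ring
  smul_mem' := by
    rintro ⟨c, hc⟩ ⟨u, r⟩ ⟨μ, hμ, H⟩
    rcases hc.lt_or_eq with hc' | rfl
    · refine ⟨μ / c, div_pos hμ hc', ?_⟩
      convert H using 2
      · show s + (μ / c) • (c • u) = s + μ • u
        rw [smul_smul, div_mul_cancel₀ _ hc'.ne']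
      · show p + μ / c * (c * r) = p + μ * r
        rw [← mul_assoc, div_mul_cancel₀ _ hc'.ne']
    · refine ⟨1, one_pos, ?_⟩
      show P (s + (1 : ℝ) • ((0 : ℝ) • u)) ≤ ((p + 1 * ((0 : ℝ) * r) : ℝ) : EReal)
      simp [hp]

/-- A subgradient relative to a subspace `V` extends to a subgradient on the whole space,
provided `s + V` meets the relative interior of the domain. This is the M. Riesz extension
theorem for the cone generated by the epigraph, the functional `(v, r) ↦ r - φ v` being given
on `V' × ℝ`; here `V'` is `V` enlarged by the orthogonal complement of `V + W`, where `W` is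
the direction of the affine hull of the domain. -/
theorem ama_extend_subgrad [FiniteDimensional ℝ E] {P : E → EReal} (hbot : ∀ u, P u ≠ ⊥)
    (hcvx : AMAConvex P) {s : E} {p : ℝ} (hp : P s = p) (V : Submodule ℝ E) (φ : E →ₗ[ℝ] ℝ)
    (hφ : ∀ v ∈ V, ∀ r : ℝ, P (s + v) ≤ r → p + φ v ≤ r)
    {u₀ : E} (hu₀ : u₀ ∈ V) (hri : s + u₀ ∈ intrinsicInterior ℝ {u : E | P u ≠ ⊤}) :
    ∃ y : E, (∀ v ∈ V, ⟪y, v⟫ = φ v) ∧ IsSubgradAt P y s := by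
  set D : Set E := {u : E | P u ≠ ⊤} with hD
  set W := (affineSpan ℝ D).direction with hW
  set C := (V ⊔ W)ᗮ with hC
  set V' := V ⊔ C with hV'
  let f : (E × ℝ) →ₗ.[ℝ] ℝ :=
    ⟨V'.prod ⊤, (LinearMap.snd ℝ E ℝ - φ ∘ₗ LinearMap.fst ℝ E ℝ).domRestrict _⟩
  have hfa : ∀ x : f.domain, f x = (x : E × ℝ).2 - φ (x : E × ℝ).1 := fun x => rfl
  have hnonneg : ∀ x : f.domain, (x : E × ℝ) ∈ amaCone hcvx hp → 0 ≤ f x := by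
    rintro ⟨⟨v', r⟩, hx⟩ ⟨μ, hμ, H⟩
    rw [hfa]
    simp only at H ⊢
    have hv' : v' ∈ V' := hx.1
    have hmem : s + μ • v' ∈ D := ne_top_of_le_ne_top (EReal.coe_ne_top _) H
    have hdir : (s + μ • v') - (s + u₀) ∈ W := by
      have := AffineSubspace.vsub_mem_direction (subset_affineSpan ℝ D hmem)
        (subset_affineSpan ℝ D (intrinsicInterior_subset hri))
      simpa using this
    have hVW : v' ∈ V ⊔ W := by
      have h1 : μ • v' = u₀ + ((s + μ • v') - (s + u₀)) := by abel
      have h2 : μ • v' ∈ V ⊔ W := by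
        rw [h1]; exact Submodule.add_mem_sup hu₀ hdir
      have h3 := (V ⊔ W).smul_mem μ⁻¹ h2
      rwa [smul_smul, inv_mul_cancel₀ hμ.ne', one_smul] at h3
    have hvV : v' ∈ V := by
      obtain ⟨v, hv, c, hc, rfl⟩ := Submodule.mem_sup.1 hv'
      have hc2 : c ∈ V ⊔ W := by
        have := (V ⊔ W).sub_mem hVW (Submodule.mem_sup_left hv)
        simpa using this
      have : c = 0 := by
        have := Submodule.inner_right_of_mem_orthogonal hc2 hc
        exact inner_self_eq_zero.1 this
      simpa [this] using hv
    have h4 := hφ (μ • v') (V.smul_mem μ hvV) _ H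
    rw [map_smul, smul_eq_mul] at h4
    have h5 : 0 ≤ μ * (r - φ v') := by linarith
    exact nonneg_of_mul_nonneg_right h5 hμ
  have hdense : ∀ y : E × ℝ, ∃ x : f.domain, (x : E × ℝ) + y ∈ amaCone hcvx hp := by
    rintro ⟨w, ρ⟩
    obtain ⟨a, ha, c, hc, rfl⟩ := (V ⊔ W).exists_add_mem_mem_orthogonal w
    obtain ⟨v₀, hv₀, w₀, hw₀, rfl⟩ := Submodule.mem_sup.1 ha
    obtain ⟨ε, hε, hmem⟩ := ama_ri_move hri hw₀
    refine ⟨⟨((ε⁻¹ • u₀ - v₀) + (-c), ((P (s + u₀ + ε • w₀)).toReal - p) / ε - ρ),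
      ⟨?_, trivial⟩⟩, ε, hε, ?_⟩
    · exact Submodule.add_mem_sup (V.sub_mem (V.smul_mem _ hu₀) hv₀) (C.neg_mem hc)
    · have h1 : s + ε • ((ε⁻¹ • u₀ - v₀) + (-c) + (v₀ + w₀ + c)) = s + u₀ + ε • w₀ := by
        have : (ε⁻¹ • u₀ - v₀) + (-c) + (v₀ + w₀ + c) = ε⁻¹ • u₀ + w₀ := by abel
        rw [this, smul_add, smul_smul, mul_inv_cancel₀ hε.ne', one_smul, add_assoc]
      have h2 : p + ε * (((P (s + u₀ + ε • w₀)).toReal - p) / ε - ρ + ρ)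
          = (P (s + u₀ + ε • w₀)).toReal := by
        field_simp
        ring
      show P (s + ε • ((ε⁻¹ • u₀ - v₀) + (-c) + (v₀ + w₀ + c))) ≤
        ((p + ε * (((P (s + u₀ + ε • w₀)).toReal - p) / ε - ρ + ρ) : ℝ) : EReal)
      rw [h1, h2]
      exact EReal.le_coe_toReal hmem
  obtain ⟨g, hg, hgs⟩ := riesz_extension (amaCone hcvx hp) f hnonneg hdense
  have hg1 : g (0, 1) = 1 := by
    have := hg ⟨((0 : E), (1 : ℝ)), ⟨V'.zero_mem, trivial⟩⟩
    rw [hfa] at this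
    simpa using this
  have hsplit : ∀ (u : E) (r : ℝ), g (u, r) = g (u, 0) + r := by
    intro u r
    have : (u, r) = (u, (0 : ℝ)) + r • ((0 : E), (1 : ℝ)) := by simp
    rw [this, map_add, map_smul, hg1]
    simp
  let ℓ : E →L[ℝ] ℝ := LinearMap.toContinuousLinearMap (-(g ∘ₗ LinearMap.inl ℝ E ℝ))
  have hℓ : ∀ u, ⟪(InnerProductSpace.toDual ℝ E).symm ℓ, u⟫ = - g (u, 0) := by
    intro u
    rw [InnerProductSpace.toDual_symm_apply]
    rfl
  refine ⟨(InnerProductSpace.toDual ℝ E).symm ℓ, fun v hv => ?_, fun u => ?_⟩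
  · have := hg ⟨(v, (0 : ℝ)), ⟨Submodule.mem_sup_left hv, trivial⟩⟩
    rw [hfa] at this
    rw [hℓ, this]
    simp
  · by_cases hu : P u = ⊤
    · rw [hu]; exact le_top
    have h1 : (u - s, (P u).toReal - p) ∈ amaCone hcvx hp := by
      refine ⟨1, one_pos, ?_⟩
      simpa using EReal.le_coe_toReal hu
    have h2 := hgs _ h1
    rw [hsplit] at h2
    rw [hp, ← EReal.coe_add, hℓ]
    nth_rewrite 1 [← EReal.coe_toReal hu (hbot u)]
    rw [EReal.coe_le_coe_iff]
    linarith

variable {Z Y : Type*}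
  [NormedAddCommGroup Z] [InnerProductSpace ℝ Z] [FiniteDimensional ℝ Z]
  [NormedAddCommGroup Y] [InnerProductSpace ℝ Y] [FiniteDimensional ℝ Y]

/-- The chain rule `∂(P ∘ (M · - b)) ⊆ M* ∂P(M · - b)` under the relative-interior
qualification. -/
theorem ama_chain_rule {P : Y → EReal} (hbot : ∀ u, P u ≠ ⊥) (hcvx : AMAConvex P)
    (M : Z →L[ℝ] Y) (b : Y) (hCQ : ∃ w : Z, M w - b ∈ intrinsicInterior ℝ {u : Y | P u ≠ ⊤})
    {z g : Z} {p : ℝ} (hp : P (M z - b) = p)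
    (hsub : ∀ (w : Z) (r : ℝ), P (M w - b) ≤ r → p + ⟪g, w - z⟫ ≤ r) :
    ∃ y : Y, ContinuousLinearMap.adjoint M y = g ∧ IsSubgradAt P y (M z - b) := by
  -- `g` vanishes on the kernel of `M`, hence lies in the range of the adjoint
  have hker : ∀ d : Z, M d = 0 → ⟪g, d⟫ = 0 := by
    have hle : ∀ d : Z, M d = 0 → ⟪g, d⟫ ≤ 0 := by
      intro d hd
      have := hsub (z + d) p (by rw [map_add, hd, add_zero, hp])
      rw [add_sub_cancel_left] at this
      linarith
    intro d hd
    have h1 := hle d hd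
    have h2 := hle (-d) (by rw [map_neg, hd, neg_zero])
    rw [inner_neg_right] at h2
    linarith
  have hg : g ∈ (ContinuousLinearMap.adjoint M).range := by
    have h1 : g ∈ M.kerᗮ := by
      rw [Submodule.mem_orthogonal']
      intro d hd
      exact hker d hd
    rw [ContinuousLinearMap.orthogonal_ker] at h1
    rwa [(Submodule.closed_of_finiteDimensional _).submodule_topologicalClosure_eq] at h1
  obtain ⟨g', hg'⟩ := hg
  have hinner : ∀ d : Z, ⟪g', M d⟫ = ⟪g, d⟫ := by
    intro d
    rw [← hg']
    exact (ContinuousLinearMap.adjoint_inner_left M d g').symm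
  obtain ⟨w, hw⟩ := hCQ
  obtain ⟨y, hy, hsg⟩ := ama_extend_subgrad (s := M z - b) (p := p) hbot hcvx hp M.range
    (InnerProductSpace.toDual ℝ Y g' : Y →L[ℝ] ℝ).toLinearMap
    (by
      rintro _ ⟨d, rfl⟩ r hr
      have h1 := hsub (z + d) r (by
        have : M (z + d) - b = M z - b + M d := by rw [map_add]; abel
        rw [this]; exact hr)
      rw [add_sub_cancel_left, ← hinner] at h1
      exact h1)
    (u₀ := M (w - z)) ⟨w - z, rfl⟩
    (by
      have : M z - b + M (w - z) = M w - b := by rw [map_sub]; abel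
      rw [this]; exact hw)
  refine ⟨y, ext_inner_right ℝ fun d => ?_, hsg⟩
  rw [ContinuousLinearMap.adjoint_inner_left, hy (M d) ⟨d, rfl⟩, ← hinner]
  rfl

/-! ### The two step equivalences -/

/-- One AMA step: with the update formula for `z₁` inserted, the optimality condition of the
`y`-subproblem reads `M z₁ - b ∈ ∂P*(y₁)`, which inverts to `y₁ ∈ ∂P(M z₁ - b)`. -/
theorem ama_subgrad_of_y_step {P : Y → EReal} (hbot : ∀ u, P u ≠ ⊥) (hprop : ∃ u, P u ≠ ⊤)
    (hlsc : LowerSemicontinuous P) (hcvx : AMAConvex P) (M : Z →L[ℝ] Y) (b : Y) (β : ℝ)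
    (x₁ z z₁ : Z) (y₁ : Y)
    (hy : ∀ y' : Y,
        conj P y₁ + ((⟪b, y₁⟫ - ⟪z, ContinuousLinearMap.adjoint M y₁⟫
            + β / 2 * ‖x₁ + ContinuousLinearMap.adjoint M y₁‖ ^ 2 : ℝ) : EReal)
          ≤ conj P y' + ((⟪b, y'⟫ - ⟪z, ContinuousLinearMap.adjoint M y'⟫
            + β / 2 * ‖x₁ + ContinuousLinearMap.adjoint M y'‖ ^ 2 : ℝ) : EReal))
    (hz : z₁ = z - β • (x₁ + ContinuousLinearMap.adjoint M y₁)) :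
    P (M z₁ - b) ≠ ⊤ ∧ IsSubgradAt P y₁ (M z₁ - b) := by
  have htop : conj P y₁ ≠ ⊤ := by
    obtain ⟨u, hu⟩ := hprop
    obtain ⟨v, d, -, hd⟩ := ama_fenchel_moreau hbot ⟨u, hu⟩ hlsc hcvx (s := u)
      (c := (P u).toReal - 1) (by
        nth_rewrite 2 [← EReal.coe_toReal hu (hbot u)]
        exact EReal.coe_lt_coe_iff.2 (by linarith))
    intro h
    have h1 := (hy v).trans (add_le_add_left hd _)
    rw [h, EReal.top_add_coe, ← EReal.coe_add, top_le_iff] at h1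
    exact EReal.coe_ne_top _ h1
  have hc1 := EReal.coe_toReal htop (ama_conj_ne_bot hprop hbot y₁)
  refine ama_subgrad_of_conj hbot hprop hlsc hcvx (c := (conj P y₁).toReal) hc1.ge ?_
  intro y' c' hc'
  have hfo : 0 ≤ c' - (conj P y₁).toReal - ⟪M z₁ - b, y' - y₁⟫ := by
    refine ama_first_order
      (B := β / 2 * ‖ContinuousLinearMap.adjoint M (y' - y₁)‖ ^ 2) fun t ht ht1 => ?_
    have h1 := ama_conj_convex hbot y₁ y' _ _ (1 - t) t hc1.ge hc' (by linarith) ht.le (by ring)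
    have h2 : (1 - t) • y₁ + t • y' = y₁ + t • (y' - y₁) := by module
    rw [h2] at h1
    have h3 := (hy _).trans (add_le_add_left h1 _)
    rw [← hc1, ← EReal.coe_add, ← EReal.coe_add, EReal.coe_le_coe_iff, map_add, map_smul,
      ← add_assoc x₁, ama_norm_add_smul_sq, inner_add_right, inner_add_right, inner_smul_right,
      inner_smul_right] at h3
    have h4 : ⟪M z₁ - b, y' - y₁⟫ = ⟪z, ContinuousLinearMap.adjoint M (y' - y₁)⟫
        - β * ⟪x₁ + ContinuousLinearMap.adjoint M y₁, ContinuousLinearMap.adjoint M (y' - y₁)⟫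
        - ⟪b, y' - y₁⟫ := by
      rw [inner_sub_left, ← ContinuousLinearMap.adjoint_inner_right, hz, inner_sub_left,
        real_inner_smul_left]
    rw [h4]
    simp only [EReal.toReal_coe] at h3
    linarith
  linarith

/-- The `z`-update together with `y₁ ∈ ∂P(M z₁ - b)` is the optimality condition of the
strongly convex proximal gradient subproblem. -/
theorem ama_pg_of_subgrad {P : Y → EReal} (hbot : ∀ u, P u ≠ ⊥)
    (M : Z →L[ℝ] Y) (b : Y) {L β : ℝ} (hL : 0 < L) (hβ : β = 1 / L)
    (x₁ z z₁ : Z) (y₁ : Y) (htop : P (M z₁ - b) ≠ ⊤) (hsub : IsSubgradAt P y₁ (M z₁ - b))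
    (hz : z₁ = z - β • (x₁ + ContinuousLinearMap.adjoint M y₁)) (w : Z) :
    ((⟪x₁, z₁⟫ + L / 2 * ‖z₁ - z‖ ^ 2 : ℝ) : EReal) + P (M z₁ - b)
      ≤ ((⟪x₁, w⟫ + L / 2 * ‖w - z‖ ^ 2 : ℝ) : EReal) + P (M w - b) := by
  by_cases hw : P (M w - b) = ⊤
  · rw [hw, EReal.coe_add_top]; exact le_top
  have h1 := hsub (M w - b)
  rw [← EReal.coe_toReal htop (hbot _), ← EReal.coe_toReal hw (hbot _)] at h1 ⊢
  rw [← EReal.coe_add, EReal.coe_le_coe_iff] at h1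
  rw [← EReal.coe_add, ← EReal.coe_add, EReal.coe_le_coe_iff]
  have h2 : M w - b - (M z₁ - b) = M (w - z₁) := by rw [map_sub]; abel
  have h3 : ContinuousLinearMap.adjoint M y₁ = -x₁ - L • (z₁ - z) := by
    rw [hz, hβ, sub_sub_cancel_left, smul_neg, smul_smul, mul_one_div_cancel hL.ne', one_smul]
    abel
  rw [h2, ← ContinuousLinearMap.adjoint_inner_left, h3, inner_sub_left, inner_neg_left,
    real_inner_smul_left, inner_sub_right x₁] at h1
  have h4 : w - z = (z₁ - z) + (1 : ℝ) • (w - z₁) := by module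
  rw [h4, ama_norm_add_smul_sq]
  have h5 : 0 ≤ L / 2 * ‖w - z₁‖ ^ 2 := by positivity
  linarith

/-- One proximal gradient step provides a subgradient `y₁` satisfying the `z`-update. -/
theorem ama_subgrad_of_pg {P : Y → EReal} (hbot : ∀ u, P u ≠ ⊥) (hcvx : AMAConvex P)
    (M : Z →L[ℝ] Y) (b : Y) (hCQ : ∃ w : Z, M w - b ∈ intrinsicInterior ℝ {u : Y | P u ≠ ⊤})
    {L β : ℝ} (hL : 0 < L) (hβ : β = 1 / L) (x₁ z z₁ : Z)
    (hpg : ∀ w : Z, ((⟪x₁, z₁⟫ + L / 2 * ‖z₁ - z‖ ^ 2 : ℝ) : EReal) + P (M z₁ - b)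
      ≤ ((⟪x₁, w⟫ + L / 2 * ‖w - z‖ ^ 2 : ℝ) : EReal) + P (M w - b)) :
    ∃ y₁ : Y, P (M z₁ - b) ≠ ⊤ ∧ IsSubgradAt P y₁ (M z₁ - b) ∧
      z₁ = z - β • (x₁ + ContinuousLinearMap.adjoint M y₁) := by
  have htop : P (M z₁ - b) ≠ ⊤ := by
    obtain ⟨w, hw⟩ := hCQ
    have hw' : P (M w - b) ≠ ⊤ := intrinsicInterior_subset hw
    intro h
    have h1 := hpg w
    rw [h, EReal.coe_add_top, ← EReal.coe_toReal hw' (hbot _), ← EReal.coe_add,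
      top_le_iff] at h1
    exact EReal.coe_ne_top _ h1
  have hp := EReal.coe_toReal htop (hbot _)
  obtain ⟨y, hy, hsub⟩ := ama_chain_rule hbot hcvx M b hCQ (g := -x₁ - L • (z₁ - z)) hp.symm (by
    intro w r hr
    have hfo : 0 ≤ r - (P (M z₁ - b)).toReal - ⟪-x₁ - L • (z₁ - z), w - z₁⟫ := by
      refine ama_first_order (B := L / 2 * ‖w - z₁‖ ^ 2) fun t ht ht1 => ?_
      have h1 := hcvx _ _ _ _ (1 - t) t hp.ge hr (by linarith) ht.le (by ring)
      have h2 : (1 - t) • (M z₁ - b) + t • (M w - b) = M (z₁ + t • (w - z₁)) - b := by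
        rw [map_add, map_smul, map_sub]; module
      rw [h2] at h1
      have h3 := (hpg _).trans (add_le_add_right h1 _)
      have h4 : z₁ + t • (w - z₁) - z = (z₁ - z) + t • (w - z₁) := by abel
      rw [← hp, ← EReal.coe_add, ← EReal.coe_add, EReal.coe_le_coe_iff, h4,
        ama_norm_add_smul_sq, inner_add_right, inner_smul_right] at h3
      rw [inner_sub_left, inner_neg_left, real_inner_smul_left]
      simp only [EReal.toReal_coe] at h3
      linarith
    linarith)
  refine ⟨y, htop, hsub, ?_⟩
  have h1 : x₁ + (-x₁ - L • (z₁ - z)) = -(L • (z₁ - z)) := by abel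
  rw [hy, hβ, h1, smul_neg, smul_smul, one_div_mul_cancel hL.ne', one_smul]
  abel

theorem ama_y_step_of_subgrad {P : Y → EReal} (hbot : ∀ u, P u ≠ ⊥)
    (M : Z →L[ℝ] Y) (b : Y) {β : ℝ} (hβ : 0 ≤ β) (x₁ z z₁ : Z) (y₁ : Y)
    (htop : P (M z₁ - b) ≠ ⊤) (hsub : IsSubgradAt P y₁ (M z₁ - b))
    (hz : z₁ = z - β • (x₁ + ContinuousLinearMap.adjoint M y₁)) (y' : Y) :
    conj P y₁ + ((⟪b, y₁⟫ - ⟪z, ContinuousLinearMap.adjoint M y₁⟫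
        + β / 2 * ‖x₁ + ContinuousLinearMap.adjoint M y₁‖ ^ 2 : ℝ) : EReal)
      ≤ conj P y' + ((⟪b, y'⟫ - ⟪z, ContinuousLinearMap.adjoint M y'⟫
        + β / 2 * ‖x₁ + ContinuousLinearMap.adjoint M y'‖ ^ 2 : ℝ) : EReal) := by
  have hp := EReal.coe_toReal htop (hbot _)
  have h1 : conj P y₁ ≤ ((⟪y₁, M z₁ - b⟫ - (P (M z₁ - b)).toReal : ℝ) : EReal) := by
    rw [ama_conj_le_iff hbot]
    intro u r hr
    have := (hsub u).trans hr
    rw [← hp, ← EReal.coe_add, EReal.coe_le_coe_iff, inner_sub_right] at this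
    linarith
  have h2 : ((⟪y', M z₁ - b⟫ - (P (M z₁ - b)).toReal : ℝ) : EReal) ≤ conj P y' := by
    rw [EReal.coe_sub, hp]
    exact le_iSup (fun u => ((⟪y', u⟫ : ℝ) : EReal) - P u) (M z₁ - b)
  refine (add_le_add_left h1 _).trans (le_trans ?_ (add_le_add_left h2 _))
  rw [← EReal.coe_add, ← EReal.coe_add, EReal.coe_le_coe_iff]
  obtain ⟨d, rfl⟩ : ∃ d, y' = y₁ + d := ⟨y' - y₁, by abel⟩
  have h3 : x₁ + ContinuousLinearMap.adjoint M (y₁ + d)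
      = (x₁ + ContinuousLinearMap.adjoint M y₁) + (1 : ℝ) • ContinuousLinearMap.adjoint M d := by
    rw [map_add, one_smul, add_assoc]
  have h4 : ⟪d, M z₁ - b⟫ = ⟪z, ContinuousLinearMap.adjoint M d⟫
      - β * ⟪x₁ + ContinuousLinearMap.adjoint M y₁, ContinuousLinearMap.adjoint M d⟫
      - ⟪b, d⟫ := by
    rw [real_inner_comm, inner_sub_left, ← ContinuousLinearMap.adjoint_inner_right, hz,
      inner_sub_left, real_inner_smul_left]
  rw [h3, ama_norm_add_smul_sq, inner_add_left y₁ d, h4, map_add, inner_add_right b,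
    inner_add_right z]
  have h5 : 0 ≤ β / 2 * ‖ContinuousLinearMap.adjoint M d‖ ^ 2 := by positivity
  linarith

end AMAProof

/-- **Equivalence of the AMA on the dual problem with the proximal gradient algorithm
(Section 2).** With `β = 1/L`: if `(x^t, y^t, z^t)` are AMA iterates for the dual
problem, then `z^t` satisfies the proximal gradient recursion
`z^{t+1} = argmin_z {⟨∇h(z^t), z⟩ + P(Mz − b) + (L/2)‖z − z^t‖²}`; conversely, if
`z^t` satisfies the proximal gradient recursion, then with `x^{t+1} = ∇h(z^t)` there
exist `y^{t+1} ∈ ∂P(Mz^{t+1} − b)` making `(x^t, y^t, z^t)` AMA iterates. -/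
theorem stmt_9
    {Z Y : Type*}
    [NormedAddCommGroup Z] [InnerProductSpace ℝ Z] [FiniteDimensional ℝ Z]
    [NormedAddCommGroup Y] [InnerProductSpace ℝ Y] [FiniteDimensional ℝ Y]
    (h : Z → ℝ) (h' : Z → Z)
    (hconv : ConvexOn ℝ Set.univ h)
    (hgrad : ∀ w : Z, HasGradientAt h (h' w) w)
    (L : ℝ) (hL : 0 < L)
    (hlip : ∀ u v : Z, ‖h' u - h' v‖ ≤ L * ‖u - v‖)
    (P : Y → EReal)
    (hP_ne_bot : ∀ u, P u ≠ ⊥) (hP_proper : ∃ u, P u ≠ ⊤)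
    (hP_lsc : LowerSemicontinuous P)
    (hP_cvx : ∀ (u₁ u₂ : Y) (a b : ℝ), 0 ≤ a → 0 ≤ b → a + b = 1 →
      P (a • u₁ + b • u₂) ≤ (a : EReal) * P u₁ + (b : EReal) * P u₂)
    (M : Z →L[ℝ] Y) (hM : M ≠ 0) (b : Y)
    -- constraint qualification: `(Range(M) − b) ∩ ri(dom P) ≠ ∅`
    (hCQ : ∃ w : Z, M w - b ∈ intrinsicInterior ℝ {u : Y | P u ≠ ⊤})
    (β : ℝ) (hβ : β = 1 / L) :
    -- if `(x^t, y^t, z^t)` are AMA iterates for the dual problem, then `z^t` satisfies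
    -- the proximal gradient recursion
    (∀ (x : ℕ → Z) (y : ℕ → Y) (z : ℕ → Z),
      (∀ (t : ℕ) (x' : Z),
        conjR h (x (t+1)) + ((-⟪z t, x (t+1)⟫ : ℝ) : EReal)
          ≤ conjR h x' + ((-⟪z t, x'⟫ : ℝ) : EReal)) →
      (∀ (t : ℕ) (y' : Y),
        conj P (y (t+1)) + ((⟪b, y (t+1)⟫ - ⟪z t, ContinuousLinearMap.adjoint M (y (t+1))⟫
            + β / 2 * ‖x (t+1) + ContinuousLinearMap.adjoint M (y (t+1))‖ ^ 2 : ℝ) : EReal)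
          ≤ conj P y' + ((⟪b, y'⟫ - ⟪z t, ContinuousLinearMap.adjoint M y'⟫
            + β / 2 * ‖x (t+1) + ContinuousLinearMap.adjoint M y'‖ ^ 2 : ℝ) : EReal)) →
      (∀ t : ℕ, z (t+1) = z t - β • (x (t+1) + ContinuousLinearMap.adjoint M (y (t+1)))) →
      (∀ (t : ℕ) (w : Z),
        ((⟪h' (z t), z (t+1)⟫ + L / 2 * ‖z (t+1) - z t‖ ^ 2 : ℝ) : EReal)
            + P (M (z (t+1)) - b)
          ≤ ((⟪h' (z t), w⟫ + L / 2 * ‖w - z t‖ ^ 2 : ℝ) : EReal) + P (M w - b))) ∧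
    -- conversely, if `z^t` satisfies the proximal gradient recursion, then setting
    -- `x^{t+1} = ∇h(z^t)` there is a choice `y^{t+1} ∈ ∂P(Mz^{t+1} − b)` such that
    -- `(x^t, y^t, z^t)` are AMA iterates
    (∀ z : ℕ → Z,
      (∀ (t : ℕ) (w : Z),
        ((⟪h' (z t), z (t+1)⟫ + L / 2 * ‖z (t+1) - z t‖ ^ 2 : ℝ) : EReal)
            + P (M (z (t+1)) - b)
          ≤ ((⟪h' (z t), w⟫ + L / 2 * ‖w - z t‖ ^ 2 : ℝ) : EReal) + P (M w - b)) →
      ∃ (x : ℕ → Z) (y : ℕ → Y),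
        (∀ t : ℕ, x (t+1) = h' (z t)) ∧
        (∀ t : ℕ, IsSubgradAt P (y (t+1)) (M (z (t+1)) - b)) ∧
        (∀ (t : ℕ) (x' : Z),
          conjR h (x (t+1)) + ((-⟪z t, x (t+1)⟫ : ℝ) : EReal)
            ≤ conjR h x' + ((-⟪z t, x'⟫ : ℝ) : EReal)) ∧
        (∀ (t : ℕ) (y' : Y),
          conj P (y (t+1)) + ((⟪b, y (t+1)⟫ - ⟪z t, ContinuousLinearMap.adjoint M (y (t+1))⟫
              + β / 2 * ‖x (t+1) + ContinuousLinearMap.adjoint M (y (t+1))‖ ^ 2 : ℝ) : EReal)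
            ≤ conj P y' + ((⟪b, y'⟫ - ⟪z t, ContinuousLinearMap.adjoint M y'⟫
              + β / 2 * ‖x (t+1) + ContinuousLinearMap.adjoint M y'‖ ^ 2 : ℝ) : EReal)) ∧
        (∀ t : ℕ, z (t+1) = z t - β • (x (t+1) + ContinuousLinearMap.adjoint M (y (t+1))))) := by
  have hcvx : AMAConvex P := ama_convex_of hP_cvx
  constructor
  · intro x y z hx hy hz t w
    obtain ⟨htop, hsub⟩ := ama_subgrad_of_y_step hP_ne_bot hP_proper hP_lsc hcvx M b β
      (x (t+1)) (z t) (z (t+1)) (y (t+1)) (hy t) (hz t)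
    rw [← ama_grad_of_x_step hconv hgrad (z t) (x (t+1)) (hx t)]
    exact ama_pg_of_subgrad hP_ne_bot M b hL hβ _ _ _ _ htop hsub (hz t) w
  · intro z hpg
    choose y htop hsub hz using fun t => ama_subgrad_of_pg hP_ne_bot hcvx M b hCQ hL hβ
      (h' (z t)) (z t) (z (t+1)) (hpg t)
    -- the recursion leaves the initial values `x 0` and `y 0` free
    refine ⟨fun t => h' (z (t - 1)), fun t => y (t - 1), fun t => rfl, hsub,
      fun t => ama_x_step_of_grad hconv hgrad (z t), fun t => ?_, hz⟩
    exact ama_y_step_of_subgrad hP_ne_bot M b (by rw [hβ]; positivity) (h' (z t)) (z t)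
      (z (t+1)) (y t) (htop t) (hsub t) (hz t)
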